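/- arXiv:1405.6866 — 3 statements merged into one kernel-verified Lean document; each statement's English description precedes it below -/
import Mathlib

section
/- There exists a Polish space X such that: (i) Cantor space {0,1}^ℕ (with product topology) topologically embeds into X; (ii) X is not σ-embeddable into Cantor space {0,1}^ℕ; and (iii) the Hilbert cube [0,1]^ℕ is not σ-embeddable into X. In particular, the σ-homeomorphism type of X lies strictly between those of Cantor space and the Hilbert cube, so not every uncountable Polish space is σ-homeomorphic to Cantor space or to the Hilbert cube. -/
/-!
The space `X` is a graph-like Polish subset of `2^ℕ × [0,1]^ℕ`. Fix an enumeration `B` of a basis of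
this product; each `x ∈ 2^ℕ` codes the open set `⋃ {B k | x k = true}`, and hence a closed subset of
the cube, namely the section of the complement over `x` itself. `X` consists of the pairs `(x, q)`
for which this closed set is nonempty and `q` is its lexicographic minimum (`LexMin`). It is a `Gδ`
set, hence Polish.

* `X` is not σ-embeddable into `2^ℕ` (`not_sigmaEmbeddable_cantor`). If it were the union of pieces
  `A n` embeddable into `2^ℕ`, zero-dimensionality would give, for each `n`, a partition between the
  faces `q n = 0` and `q n = 1` that misses `A n` (`exists_partition`). The intersection of the
  partitions is a closed set, whose complement has a code `c`. The section of the intersection over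
  `c` is nonempty because the opposite faces of the cube are essential (`exists_notMem_partitions`),
  so its lexicographic minimum yields a point `(c, q)` of `X` outside all the `A n`.
* The cube is not σ-embeddable into `X` (`not_sigmaEmbeddable_cube`). The first projection is a
  continuous injection of `X` into `2^ℕ`, and the cube is not a countable union of sets with
  continuous injections into `2^ℕ` (`cube_not_countable_union`). The latter is shown by constructing
  a decreasing sequence of closed sets, each essential for infinitely many pairs of opposite faces,
  the `n`-th step avoiding the `n`-th set (`Essential.avoid`).
* `X` contains a Cantor set by the perfect set theorem, since countable spaces are σ-embeddable into
  `2^ℕ`.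

Essentiality of the faces of the cube rests on a cubical Sperner lemma (`exists_cell`): labels
separating the opposite faces of a grid all change within a common cell. It is proved with mod 2
cochains, by evaluating the cup product of the coboundaries of the labels on the triangulated grid
(`gridSum_cup`).
-/

open Set

/-- `X` is σ-embeddable into `Y`: `X` is a countable union of subsets each of which
(with the subspace topology) is homeomorphic to a subspace of `Y`. -/
def SigmaEmbeddable (X : Type*) (Y : Type*) [TopologicalSpace X] [TopologicalSpace Y] : Prop :=
  ∃ A : ℕ → Set X, (⋃ n, A n) = univ ∧ ∀ n, ∃ B : Set Y, Nonempty (↥(A n) ≃ₜ ↥B)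

namespace HC

/-! ### Mod 2 cochains and the cubical Sperner lemma -/

/-- The mod 2 coboundary of a cochain `φ`: `cobd φ l` is the sum of `φ` over all lists obtained from
`l` by deleting one entry. Cochains are functions on lists of vertices; a list with `d + 1` entries
is a (possibly degenerate) ordered `d`-simplex. -/
def cobd {α : Type*} : (List α → ZMod 2) → List α → ZMod 2
  | _, [] => 0
  | φ, a :: l => φ l + cobd (fun m => φ (a :: m)) l

/-- The prism operator for the two vertex maps `lo` and `hi`: `prism lo hi φ [a₀, …, a_d]` is the
sum over `j` of `φ [lo a₀, …, lo a_j, hi a_j, …, hi a_d]`, that is, `φ` summed over the simplices of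
the standard triangulation of the prism over `[a₀, …, a_d]`. -/
def prism {α : Type*} (lo hi : α → α) : (List α → ZMod 2) → List α → ZMod 2
  | _, [] => 0
  | φ, a :: l => φ (lo a :: hi a :: l.map hi) + prism lo hi (fun m => φ (lo a :: m)) l

section
variable {α : Type*}

lemma cobd_add (φ ψ : List α → ZMod 2) (l : List α) :
    cobd (fun m => φ m + ψ m) l = cobd φ l + cobd ψ l := by
  induction l generalizing φ ψ with
  | nil => simp [cobd]
  | cons a l ih => simp only [cobd, ih]; ring

lemma cobd_mul (c : ZMod 2) (φ : List α → ZMod 2) (l : List α) :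
    cobd (fun m => c * φ m) l = c * cobd φ l := by
  induction l generalizing φ with
  | nil => simp [cobd]
  | cons a l ih => simp only [cobd, ih]; ring

lemma cobd_map (g : α → α) (φ : List α → ZMod 2) (l : List α) :
    cobd (fun m => φ (m.map g)) l = cobd φ (l.map g) := by
  induction l generalizing φ with
  | nil => simp [cobd]
  | cons a l ih =>
    simp only [cobd, List.map_cons]
    rw [← ih (fun m => φ (g a :: m))]

lemma cobd_cobd (φ : List α → ZMod 2) (l : List α) : cobd (cobd φ) l = 0 := by
  induction l generalizing φ with
  | nil => simp [cobd]
  | cons a l ih =>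
    have h : (fun m => cobd φ (a :: m)) = fun m => φ m + cobd (fun k => φ (a :: k)) m := rfl
    rw [cobd, h, cobd_add, ih, ← add_assoc, CharTwo.add_self_eq_zero, zero_add]

lemma prism_add (lo hi : α → α) (φ ψ : List α → ZMod 2) (l : List α) :
    prism lo hi (fun m => φ m + ψ m) l = prism lo hi φ l + prism lo hi ψ l := by
  induction l generalizing φ ψ with
  | nil => simp [prism]
  | cons a l ih => simp only [prism, ih]; ring

/-- The prism over `l` only involves vertices of the form `lo p` and `hi p` with `p ∈ l`. -/
lemma prism_eq_zero (lo hi : α → α) (φ : List α → ZMod 2) (l : List α)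
    (h : ∀ m : List α, (∀ x ∈ m, ∃ p ∈ l, x = lo p ∨ x = hi p) → φ m = 0) :
    prism lo hi φ l = 0 := by
  induction l generalizing φ with
  | nil => rfl
  | cons a l ih =>
    rw [prism, h, ih, add_zero]
    · intro m hm
      apply h
      intro x hx
      rcases List.mem_cons.1 hx with rfl | hx
      · exact ⟨a, by simp, Or.inl rfl⟩
      · obtain ⟨p, hp, h⟩ := hm x hx
        exact ⟨p, by simp [hp], h⟩
    · intro x hx
      rw [← List.map_cons (f := hi)] at hx
      rcases List.mem_cons.1 hx with rfl | hx
      · exact ⟨a, by simp, Or.inl rfl⟩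
      · obtain ⟨p, hp, rfl⟩ := List.mem_map.1 hx
        exact ⟨p, hp, Or.inr rfl⟩

/-- The chain homotopy formula: modulo 2, the boundary of a prism consists of its top, its bottom
and the prism over the boundary. -/
lemma prism_cobd (lo hi : α → α) (φ : List α → ZMod 2) (l : List α) :
    prism lo hi (cobd φ) l = cobd (prism lo hi φ) l + φ (l.map hi) + φ (l.map lo) := by
  induction l generalizing φ with
  | nil => simp [prism, cobd, CharTwo.add_self_eq_zero]
  | cons a l ih =>
    have h1 : (fun m => cobd φ (lo a :: m))
        = fun m => φ m + cobd (fun k => φ (lo a :: k)) m := rfl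
    have h2 : (fun m => prism lo hi φ (a :: m))
        = fun m => φ (lo a :: hi a :: m.map hi) + prism lo hi (fun k => φ (lo a :: k)) m := rfl
    rw [prism, h1, prism_add, ih, cobd, cobd, cobd, h2, cobd_add,
      cobd_map hi (fun m => φ (lo a :: hi a :: m))]
    simp only [List.map_cons]
    have h3 := CharTwo.add_self_eq_zero (φ (lo a :: l.map hi))
    linear_combination h3

end

/-- The sum of an `n`-cochain over the simplices of the standard (Kuhn) triangulation of the grid
`{0, …, N}ⁿ`, obtained by stacking prisms one coordinate at a time. Grid points are functions `ℕ →
ℕ` whose coordinates from `n` on vanish. -/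
def gridSum (N : ℕ) : ℕ → (List (ℕ → ℕ) → ZMod 2) → ZMod 2
  | 0, φ => φ [fun _ => 0]
  | n + 1, φ => ∑ t ∈ Finset.range N, gridSum N n
      (prism (fun p => Function.update p n t) (fun p => Function.update p n (t + 1)) φ)

lemma gridSum_add (N n : ℕ) (φ ψ : List (ℕ → ℕ) → ZMod 2) :
    gridSum N n (fun l => φ l + ψ l) = gridSum N n φ + gridSum N n ψ := by
  induction n generalizing φ ψ with
  | zero => rfl
  | succ n ih =>
    simp only [gridSum, ← Finset.sum_add_distrib, ← ih]
    simp only [← prism_add]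

/-- Every simplex of the triangulated grid lies in a single unit cell `v + {0, 1}ⁿ`, so a cochain
which vanishes on all lists inside a unit cell has sum zero. -/
lemma gridSum_eq_zero (N n : ℕ) (φ : List (ℕ → ℕ) → ZMod 2)
    (h : ∀ (v : ℕ → ℕ) (l : List (ℕ → ℕ)), (∀ i < n, v i < N) →
      (∀ p ∈ l, ∀ i, v i ≤ p i ∧ p i ≤ v i + 1 ∧ (n ≤ i → p i = 0)) → φ l = 0) :
    gridSum N n φ = 0 := by
  induction n generalizing φ with
  | zero => exact h (fun _ => 0) _ (by simp) (by simp)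
  | succ n ih =>
    refine Finset.sum_eq_zero fun t ht => ih _ fun v l hv hl => prism_eq_zero _ _ _ _ fun m hm => ?_
    refine h (Function.update v n t) m (fun i hi => ?_) fun x hx i => ?_
    · rcases eq_or_ne i n with rfl | hin
      · simpa using ht
      · simpa [hin] using hv i (by omega)
    · obtain ⟨p, hp, hx⟩ := hm x hx
      have := hl p hp i
      rcases eq_or_ne i n with rfl | hin
      · rcases hx with rfl | rfl <;> simp
      · have : x i = p i := by rcases hx with rfl | rfl <;> simp [hin]
        rw [this, Function.update_of_ne hin]
        exact ⟨by omega, by omega, fun _ => by omega⟩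

/-- Stacking prisms in the last direction, the intermediate horizontal faces cancel telescopically
and only the faces `p n = 0` and `p n = N` survive. -/
lemma gridSum_succ_cobd (N n : ℕ) (φ : List (ℕ → ℕ) → ZMod 2) :
    gridSum N (n + 1) (cobd φ) =
      ∑ t ∈ Finset.range N, gridSum N n (cobd (prism (fun p => Function.update p n t)
        (fun p => Function.update p n (t + 1)) φ)) +
      (gridSum N n (fun l => φ (l.map fun p => Function.update p n N)) +
        gridSum N n (fun l => φ (l.map fun p => Function.update p n 0))) := by
  set g : ℕ → ZMod 2 := fun t => gridSum N n (fun l => φ (l.map fun p => Function.update p n t))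
  have h : ∀ t, gridSum N n (prism (fun p => Function.update p n t)
        (fun p => Function.update p n (t + 1)) (cobd φ)) =
      gridSum N n (cobd (prism (fun p => Function.update p n t)
        (fun p => Function.update p n (t + 1)) φ)) + (g (t + 1) - g t) := by
    intro t
    rw [CharTwo.sub_eq_add, ← add_assoc, ← gridSum_add, ← gridSum_add]
    congr 1
    funext l
    exact prism_cobd _ _ _ _
  rw [gridSum, Finset.sum_congr rfl fun t _ => h t, Finset.sum_add_distrib, Finset.sum_range_sub,
    CharTwo.sub_eq_add]

lemma gridSum_zero_fun (N n : ℕ) : gridSum N n (fun _ => 0) = 0 :=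
  gridSum_eq_zero _ _ _ fun _ _ _ _ => rfl

/-- Stokes' theorem for cochains vanishing on the boundary of the grid. -/
lemma gridSum_cobd_eq_zero (N n : ℕ) (φ : List (ℕ → ℕ) → ZMod 2) (h0 : φ [] = 0)
    (h : ∀ i < n, ∀ c, (c = 0 ∨ c = N) → ∀ l : List (ℕ → ℕ), (∀ p ∈ l, p i = c) → φ l = 0) :
    gridSum N n (cobd φ) = 0 := by
  induction n generalizing φ with
  | zero => simp [gridSum, cobd, h0]
  | succ n ih =>
    have hf : ∀ c, (c = 0 ∨ c = N) →
        gridSum N n (fun l => φ (l.map fun p => Function.update p n c)) = 0 := by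
      intro c hc
      rw [← gridSum_zero_fun N n]
      congr 1
      funext l
      exact h n (by omega) c hc _ (by simp)
    rw [gridSum_succ_cobd, hf N (Or.inr rfl), hf 0 (Or.inl rfl), add_zero, add_zero]
    refine Finset.sum_eq_zero fun t _ => ih _ rfl fun i hi c hc l hl => ?_
    refine prism_eq_zero _ _ _ _ fun m hm => h i (by omega) c hc m fun x hx => ?_
    obtain ⟨p, hp, hx⟩ := hm x hx
    rcases hx with rfl | rfl <;> simp [hl p hp, hi.ne]

/-- Multiplication of a cochain by a function of the first vertex (the cup product with the
`0`-cochain `f`). -/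
def weight {α : Type*} (f : α → ZMod 2) (φ : List α → ZMod 2) : List α → ZMod 2
  | [] => 0
  | a :: l => f a * φ (a :: l)

/-- The iterated cup product `δ(s (n-1)) ⌣ ⋯ ⌣ δ(s 0)` of the coboundaries of the `0`-cochains `s
i`, written as `cobd (s n ⌣ cup s n)` so that it is visibly a cocycle. Its value on a simplex is
given by `cup_succ_cons_cons`. -/
def cup {α : Type*} (s : ℕ → α → ZMod 2) : ℕ → List α → ZMod 2
  | 0 => fun l => if l.length = 1 then 1 else 0
  | n + 1 => cobd (weight (s n) (cup s n))

section
variable {α : Type*} (s : ℕ → α → ZMod 2)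

lemma cobd_cup (n : ℕ) (l : List α) : cobd (cup s n) l = 0 := by
  cases n with
  | succ n => exact cobd_cobd _ _
  | zero =>
    match l with
    | [] => rfl
    | [a] => simp [cobd, cup]
    | [a, b] => simp [cobd, cup, CharTwo.add_self_eq_zero]
    | a :: b :: c :: l =>
      have : ∀ (l : List α) (φ : List α → ZMod 2), (∀ m, φ m = 0) → cobd φ l = 0 := by
        intro l
        induction l with
        | nil => intros; rfl
        | cons a l ih => intro φ h; rw [cobd, h, ih _ (fun m => h _), add_zero]
      simp [cobd, cup, this]

lemma cup_nil (n : ℕ) : cup s n [] = 0 := by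
  cases n <;> simp [cup, cobd]

lemma cup_succ_cons_cons (n : ℕ) (a b : α) (l : List α) :
    cup s (n + 1) (a :: b :: l) = (s n a + s n b) * cup s n (b :: l) := by
  have h := cobd_cup s n (a :: b :: l)
  rw [cobd] at h
  rw [cup, cobd]
  have : (fun m => weight (s n) (cup s n) (a :: m)) = fun m => s n a * cup s n (a :: m) := rfl
  rw [this, cobd_mul, weight]
  have h2 := CharTwo.add_self_eq_zero (s n a * cup s n (b :: l))
  linear_combination s n a * h - h2

/-- The cup product vanishes on a simplex on which one of the labels `s i` is constant. -/
lemma cup_eq_zero (n i : ℕ) (hi : i < n) (l : List α) (h : ∀ a ∈ l, ∀ b ∈ l, s i a = s i b) :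
    cup s n l = 0 := by
  induction n generalizing l with
  | zero => omega
  | succ n ih =>
    match l with
    | [] => rfl
    | [a] => simp [cup, cobd, weight]
    | a :: b :: l =>
      rw [cup_succ_cons_cons]
      rcases eq_or_ne i n with rfl | hin
      · rw [h a (by simp) b (by simp), CharTwo.add_self_eq_zero, zero_mul]
      · rw [ih (by omega) (b :: l), mul_zero]
        intro x hx y hy
        exact h x (List.mem_cons_of_mem _ hx) y (List.mem_cons_of_mem _ hy)

lemma cup_map (g : α → α) (n : ℕ) (l : List α) :
    cup s n (l.map g) = cup (fun i p => s i (g p)) n l := by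
  induction n generalizing l with
  | zero => simp [cup]
  | succ n ih =>
    rw [cup, ← cobd_map, cup]
    congr 1
    funext m
    cases m with
    | nil => rfl
    | cons a m => simp only [List.map_cons, weight]; rw [← List.map_cons (f := g), ih]

end

/-- The degree computation behind the cubical Sperner lemma: for labels separating opposite faces,
the cup product of their coboundaries has total mass `1` over the grid. By induction on `n`: writing
it as a coboundary and applying `gridSum_succ_cobd`, the face `p n = N`, on which `s n = 1`,
contributes the product for `n` labels, the face `p n = 0` contributes nothing, and the side faces
contribute zero by `gridSum_cobd_eq_zero`. -/
lemma gridSum_cup (N n : ℕ) (s : ℕ → (ℕ → ℕ) → ZMod 2)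
    (h0 : ∀ i < n, ∀ p : ℕ → ℕ, p i = 0 → s i p = 0)
    (h1 : ∀ i < n, ∀ p : ℕ → ℕ, p i = N → s i p = 1) :
    gridSum N n (cup s n) = 1 := by
  induction n generalizing s with
  | zero => simp [gridSum, cup]
  | succ n ih =>
    rw [cup, gridSum_succ_cobd]
    have e1 : (fun l : List (ℕ → ℕ) => weight (s n) (cup s n) (l.map fun p => Function.update p n N)) =
        cup (fun i p => s i (Function.update p n N)) n := by
      funext l
      rw [← cup_map]
      cases l with
      | nil => simp [weight, cup_nil]
      | cons a l => simp [weight, h1 n (by omega)]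
    have e0 : (fun l : List (ℕ → ℕ) => weight (s n) (cup s n) (l.map fun p => Function.update p n 0)) =
        fun _ => 0 := by
      funext l
      cases l with
      | nil => simp [weight]
      | cons a l => simp [weight, h0 n (by omega)]
    rw [e0, e1, gridSum_zero_fun, add_zero, ih, Finset.sum_eq_zero, zero_add]
    · intro t _
      refine gridSum_cobd_eq_zero _ _ _ rfl fun i hi c hc l hl => prism_eq_zero _ _ _ _ fun m hm => ?_
      have hm' : ∀ x ∈ m, x i = c := by
        intro x hx
        obtain ⟨p, hp, hx⟩ := hm x hx
        rcases hx with rfl | rfl <;> simp [hl p hp, hi.ne]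
      cases m with
      | nil => rfl
      | cons a m =>
        rw [weight, cup_eq_zero s n i hi, mul_zero]
        intro x hx y hy
        rcases hc with rfl | rfl
        · rw [h0 i (by omega) x (hm' x hx), h0 i (by omega) y (hm' y hy)]
        · rw [h1 i (by omega) x (hm' x hx), h1 i (by omega) y (hm' y hy)]
    · intro i hi p hp
      exact h0 i (by omega) _ (by simpa [hi.ne] using hp)
    · intro i hi p hp
      exact h1 i (by omega) _ (by simpa [hi.ne] using hp)

/-- The cubical Sperner lemma: if the label `s i` is `0` on the face `p i = 0` and `1` on the face
`p i = N` for every `i < n`, then in some unit cell each of the `n` labels takes both values. -/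
theorem exists_cell (N n : ℕ) (s : ℕ → (ℕ → ℕ) → ZMod 2)
    (h0 : ∀ i < n, ∀ p : ℕ → ℕ, p i = 0 → s i p = 0)
    (h1 : ∀ i < n, ∀ p : ℕ → ℕ, p i = N → s i p = 1) :
    ∃ v : ℕ → ℕ, ∀ i < n, ∃ p q : ℕ → ℕ, (∀ j, v j ≤ p j ∧ p j ≤ v j + 1) ∧
      (∀ j, v j ≤ q j ∧ q j ≤ v j + 1) ∧ s i p ≠ s i q := by
  by_contra! hcon
  have := gridSum_cup N n s h0 h1
  rw [gridSum_eq_zero] at this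
  · exact zero_ne_one this
  · intro v l _ hl
    obtain ⟨i, hi, h⟩ := hcon v
    exact cup_eq_zero s n i hi l fun a ha b hb =>
      h a b (fun j => ⟨(hl a ha j).1, (hl a ha j).2.1⟩) fun j => ⟨(hl b hb j).1, (hl b hb j).2.1⟩

/-! ### Partitions of the Hilbert cube -/

/-- The Hilbert cube. -/
abbrev Cube : Type := ℕ → unitInterval

/-- Every entourage of the cube contains all pairs of points whose coordinates differ by at most `1
/ N`, for suitable `N`. -/
lemma exists_mesh {V : Set (Cube × Cube)} (hV : V ∈ uniformity Cube) :
    ∃ N : ℕ, 0 < N ∧ ∀ x y : Cube, (∀ i, dist (x i) (y i) ≤ 1 / (N : ℝ)) → (x, y) ∈ V := by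
  by_contra! hcon
  choose x y hxy hV' using fun N : ℕ => hcon (N + 1) N.succ_pos
  have : Filter.Tendsto (fun N => (x N, y N)) Filter.atTop (uniformity Cube) := by
    rw [Pi.uniformity, Filter.tendsto_iInf]
    intro i
    rw [Filter.tendsto_comap_iff]
    refine tendsto_uniformity_iff_dist_tendsto_zero.2 ?_
    refine squeeze_zero (fun _ => dist_nonneg) (fun N => hxy N i) ?_
    exact_mod_cast tendsto_one_div_add_atTop_nhds_zero_nat (𝕜 := ℝ)
  obtain ⟨N, hN⟩ := (this.eventually hV).exists
  exact hV' N hN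

/-- The point of the cube with coordinates `p i / N`, truncated to the unit interval. -/
noncomputable def gridPoint (N : ℕ) (p : ℕ → ℕ) : Cube :=
  fun i => projIcc 0 1 zero_le_one ((p i : ℝ) / N)

lemma dist_gridPoint {N : ℕ} (hN : 0 < N) {v p : ℕ → ℕ} (h : ∀ j, v j ≤ p j ∧ p j ≤ v j + 1)
    (i : ℕ) : dist (gridPoint N v i) (gridPoint N p i) ≤ 1 / (N : ℝ) := by
  have hN' : (0 : ℝ) < N := by exact_mod_cast hN
  refine (abs_projIcc_sub_projIcc zero_le_one).trans ?_
  have h1 : (v i : ℝ) ≤ p i := by exact_mod_cast (h i).1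
  have h2 : (p i : ℝ) ≤ v i + 1 := by exact_mod_cast (h i).2
  rw [← sub_div, abs_div, abs_of_pos hN']
  gcongr
  rw [abs_le]
  constructor <;> linarith

/-- The face `q e = c` of the Hilbert cube; only `c = 0` and `c = 1` are used. -/
def face (c : unitInterval) (e : ℕ) : Set Cube := {q | q e = c}

/-- The infinite-dimensional partition theorem: if for each coordinate `e` disjoint open sets `U e`,
`V e` contain the two opposite faces, then the partitions `(U e ∪ V e)ᶜ` have a common point.
Otherwise finitely many of the sets cover the compact cube, and a grid finer than a Lebesgue number
of the cover contradicts `exists_cell`. -/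
theorem exists_notMem_partitions (U V : ℕ → Set Cube) (hU : ∀ e, IsOpen (U e))
    (hV : ∀ e, IsOpen (V e)) (hUV : ∀ e, Disjoint (U e) (V e))
    (hAU : ∀ e, face 0 e ⊆ U e) (hBV : ∀ e, face 1 e ⊆ V e) :
    ∃ q, ∀ e, q ∉ U e ∧ q ∉ V e := by
  classical
  by_contra! hcon
  obtain ⟨t, ht⟩ := isCompact_univ.elim_finite_subcover (fun e => U e ∪ V e)
    (fun e => (hU e).union (hV e)) (fun q _ => by
      obtain ⟨e, he⟩ := hcon q
      exact mem_iUnion.2 ⟨e, by by_cases h : q ∈ U e; exacts [Or.inl h, Or.inr (he h)]⟩)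
  obtain ⟨n, hn⟩ := t.exists_nat_subset_range
  let c : Fin n × Bool → Set Cube := fun x => if x.2 then U x.1 else V x.1
  obtain ⟨W, hW, hWc⟩ := lebesgue_number_lemma (U := c) (isCompact_univ (X := Cube))
    (by rintro ⟨e, b⟩; cases b <;> simp [c, hU, hV])
    (fun q _ => by
      obtain ⟨e, he, h⟩ := mem_iUnion₂.1 (ht (mem_univ q))
      have hen : e < n := Finset.mem_range.1 (hn he)
      rcases h with h | h
      · exact mem_iUnion.2 ⟨(⟨e, hen⟩, true), by simpa [c] using h⟩
      · exact mem_iUnion.2 ⟨(⟨e, hen⟩, false), by simpa [c] using h⟩)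
  obtain ⟨N, hN, hNW⟩ := exists_mesh hW
  obtain ⟨v, hv⟩ := exists_cell N n (fun e p => if gridPoint N p ∈ U e then 0 else 1)
    (fun e _ p hp => if_pos (hAU e (by simp [face, gridPoint, hp])))
    (fun e _ p hp => if_neg fun h => disjoint_left.1 (hUV e) h (hBV e (by
      have : (N : ℝ) ≠ 0 := by exact_mod_cast hN.ne'
      simp [face, gridPoint, hp, this])))
  obtain ⟨⟨e, b⟩, hb⟩ := hWc (gridPoint N v) (mem_univ _)
  obtain ⟨p, q, hp, hq, hne⟩ := hv e e.2
  have hp' : gridPoint N p ∈ c (e, b) := hb (hNW _ _ (dist_gridPoint hN hp))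
  have hq' : gridPoint N q ∈ c (e, b) := hb (hNW _ _ (dist_gridPoint hN hq))
  apply hne
  cases b
  · simp only [c, Bool.false_eq_true, if_false] at hp' hq'
    rw [if_neg fun h => disjoint_left.1 (hUV e) h hp', if_neg fun h => disjoint_left.1 (hUV e) h hq']
  · simp only [c, if_true] at hp' hq'
    rw [if_pos hp', if_pos hq']

/-! ### Essential families of faces -/

/-- `F` and `G` are disjoint closed sets containing the faces `q e = 0` and `q e = 1`, respectively.
-/
structure IsPair (e : ℕ) (F G : Set Cube) : Prop where
  closed_left : IsClosed F
  closed_right : IsClosed G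
  disj : Disjoint F G
  face_left : face 0 e ⊆ F
  face_right : face 1 e ⊆ G

/-- The family of opposite faces indexed by `E` is essential on `K`: no choice of disjoint closed
enlargements `F e`, `G e` of the faces with `e ∈ E` covers `K`. This is a strong form of
infinite-dimensionality of `K` when `E` is infinite. -/
def Essential (K : Set Cube) (E : Set ℕ) : Prop :=
  ∀ F G : ℕ → Set Cube, (∀ e, IsPair e (F e) (G e)) → ∃ q ∈ K, ∀ e ∈ E, q ∉ F e ∧ q ∉ G e

lemma Essential.mono {K : Set Cube} {E E' : Set ℕ} (h : Essential K E) (hE : E' ⊆ E) :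
    Essential K E' := fun F G hFG =>
  let ⟨q, hq, h⟩ := h F G hFG
  ⟨q, hq, fun e he => h e (hE he)⟩

lemma isClosed_face (c : unitInterval) (e : ℕ) : IsClosed (face c e) :=
  isClosed_eq (continuous_apply e) continuous_const

/-- A pair of closed sets can be enlarged to open sets whose closures still form a pair. -/
lemma IsPair.exists_open {e : ℕ} {F G : Set Cube} (h : IsPair e F G) :
    ∃ U V, IsOpen U ∧ IsOpen V ∧ F ⊆ U ∧ G ⊆ V ∧ IsPair e (closure U) (closure V) := by
  obtain ⟨U, hU, hFU, hUG⟩ := normal_exists_closure_subset h.closed_left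
    h.closed_right.isOpen_compl (disjoint_left.1 h.disj)
  obtain ⟨V, hV, hGV, hVU⟩ := normal_exists_closure_subset h.closed_right
    isClosed_closure.isOpen_compl (fun x hx hx' => hUG hx' hx)
  exact ⟨U, V, hU, hV, hFU, hGV, isClosed_closure, isClosed_closure,
    disjoint_right.2 fun x hx => hVU hx, (h.face_left.trans hFU).trans subset_closure,
    (h.face_right.trans hGV).trans subset_closure⟩

lemma essential_univ : Essential univ univ := by
  intro F G hFG
  choose U V hU hV hFU hGV hP using fun e => (hFG e).exists_open
  obtain ⟨q, hq⟩ := exists_notMem_partitions U V hU hV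
    (fun e => (hP e).disj.mono subset_closure subset_closure)
    (fun e => (hFG e).face_left.trans (hFU e)) (fun e => (hFG e).face_right.trans (hGV e))
  exact ⟨q, mem_univ q, fun e _ => ⟨fun h => (hq e).1 (hFU e h), fun h => (hq e).2 (hGV e h)⟩⟩

lemma isPair_default (e : ℕ) : IsPair e (face 0 e) (face 1 e) :=
  ⟨isClosed_face _ _, isClosed_face _ _,
    disjoint_left.2 fun q (h0 : q e = 0) (h1 : q e = 1) => zero_ne_one (h0.symm.trans h1),
    subset_rfl, subset_rfl⟩

lemma Essential.nonempty {K : Set Cube} {E : Set ℕ} (h : Essential K E) : K.Nonempty :=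
  let ⟨q, hq, _⟩ := h _ _ isPair_default
  ⟨q, hq⟩

/-- Cutting `K` down by partitions in the directions of `E` leaves the remaining directions `E'`
essential. -/
lemma Essential.cut {K : Set Cube} {E E' : Set ℕ} (h : Essential K (E ∪ E')) (hd : Disjoint E E')
    (U V F G : ℕ → Set Cube) (hP : ∀ e, IsPair e (F e) (G e))
    (hU : ∀ e, U e ⊆ F e) (hV : ∀ e, V e ⊆ G e) :
    Essential {q ∈ K | ∀ e ∈ E, q ∉ U e ∧ q ∉ V e} E' := by
  classical
  intro F' G' hP'
  obtain ⟨q, hq, hqe⟩ := h (fun e => if e ∈ E then F e else F' e)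
    (fun e => if e ∈ E then G e else G' e) (fun e => by split_ifs; exacts [hP e, hP' e])
  refine ⟨q, ⟨hq, fun e he => ?_⟩, fun e he => ?_⟩
  · have := hqe e (Or.inl he)
    simp only [he, if_true] at this
    exact ⟨fun h => this.1 (hU e h), fun h => this.2 (hV e h)⟩
  · have := hqe e (Or.inr he)
    simpa only [disjoint_right.1 hd he, if_false] using this

/-- Essentiality passes to one of two disjoint closed pieces: pairs that fail on the two pieces can
be glued. -/
lemma Essential.of_union {K₀ K₁ : Set Cube} {E : Set ℕ} (h₀ : IsClosed K₀) (h₁ : IsClosed K₁)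
    (hd : Disjoint K₀ K₁) (h : Essential (K₀ ∪ K₁) E) : Essential K₀ E ∨ Essential K₁ E := by
  by_contra! hcon
  simp only [Essential, not_forall] at hcon
  obtain ⟨⟨F, G, hP, hn⟩, F', G', hP', hn'⟩ := hcon
  push Not at hn hn'
  obtain ⟨q, hq, hqe⟩ := h (fun e => (F e ∩ K₀ ∪ F' e ∩ K₁) ∪ face 0 e)
    (fun e => (G e ∩ K₀ ∪ G' e ∩ K₁) ∪ face 1 e) (fun e => by
      refine ⟨?_, ?_, ?_, subset_union_right, subset_union_right⟩
      · exact ((((hP e).closed_left.inter h₀).union ((hP' e).closed_left.inter h₁))).union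
          (isClosed_face _ _)
      · exact ((((hP e).closed_right.inter h₀).union ((hP' e).closed_right.inter h₁))).union
          (isClosed_face _ _)
      · have d1 := disjoint_left.1 (hP e).disj
        have d2 := disjoint_left.1 (hP' e).disj
        have d3 := disjoint_left.1 hd
        have d4 := disjoint_left.1 (isPair_default e).disj
        have f1 := (hP e).face_left
        have f2 := (hP e).face_right
        have f3 := (hP' e).face_left
        have f4 := (hP' e).face_right
        rw [disjoint_left]
        rintro x ((⟨a, b⟩ | ⟨a, b⟩) | a) ((⟨c, d⟩ | ⟨c, d⟩) | c)
        · exact d1 a c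
        · exact d3 b d
        · exact d1 a (f2 c)
        · exact d3 d b
        · exact d2 a c
        · exact d2 a (f4 c)
        · exact d1 (f1 a) c
        · exact d2 (f3 a) c
        · exact d4 a c)
  rcases hq with hq | hq
  · obtain ⟨e, he, h⟩ := hn q hq
    have := hqe e he
    by_cases hF : q ∈ F e
    · exact this.1 (Or.inl (Or.inl ⟨hF, hq⟩))
    · exact this.2 (Or.inl (Or.inl ⟨h hF, hq⟩))
  · obtain ⟨e, he, h⟩ := hn' q hq
    have := hqe e he
    by_cases hF : q ∈ F' e
    · exact this.1 (Or.inl (Or.inr ⟨hF, hq⟩))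
    · exact this.2 (Or.inl (Or.inr ⟨h hF, hq⟩))

/-- Essentiality passes to decreasing intersections of closed sets, by compactness. -/
lemma Essential.iInter {K : ℕ → Set Cube} {E : Set ℕ} (hK : ∀ i, IsClosed (K i))
    (hanti : ∀ i, K (i + 1) ⊆ K i) (h : ∀ i, Essential (K i) E) : Essential (⋂ i, K i) E := by
  intro F G hP
  choose U V hU hV hFU hGV hP' using fun e => (hP e).exists_open
  have hO : IsOpen (⋃ e ∈ E, U e ∪ V e) :=
    isOpen_biUnion fun e _ => (hU e).union (hV e)
  obtain ⟨q, hq⟩ := IsCompact.nonempty_iInter_of_sequence_nonempty_isCompact_isClosed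
    (fun i => K i \ ⋃ e ∈ E, U e ∪ V e) (fun i => sdiff_subset_sdiff_left (hanti i))
    (fun i => by
      obtain ⟨q, hq, hqe⟩ := h i _ _ hP'
      refine ⟨q, hq, fun hmem => ?_⟩
      obtain ⟨e, he, h | h⟩ := mem_iUnion₂.1 hmem
      · exact (hqe e he).1 (subset_closure h)
      · exact (hqe e he).2 (subset_closure h))
    ((hK 0).inter hO.isClosed_compl).isCompact (fun i => (hK i).inter hO.isClosed_compl)
  rw [mem_iInter] at hq
  refine ⟨q, mem_iInter.2 fun i => (hq i).1, fun e he => ⟨fun h => (hq 0).2 ?_, fun h => (hq 0).2 ?_⟩⟩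
  · exact mem_iUnion₂.2 ⟨e, he, Or.inl (hFU e h)⟩
  · exact mem_iUnion₂.2 ⟨e, he, Or.inr (hGV e h)⟩

/-- The dichotomy used to decide one bit. Given disjoint open sets `U`, `V`, either the part of `K`
outside `U ∪ V` is essential in the directions `E`, or partitions in the directions `E` cut `K` down
to a set inside `U ∪ V`, and one of its halves in `U` and `V` is essential in the directions `E'`.
-/
lemma Essential.decide {K U V : Set Cube} {E E' : Set ℕ} (hK : IsClosed K) (hU : IsOpen U)
    (hV : IsOpen V) (hUV : Disjoint U V) (hd : Disjoint E E') (h : Essential K (E ∪ E')) :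
    Essential (K \ (U ∪ V)) E ∨
      ∃ K' ⊆ K, IsClosed K' ∧ (K' ⊆ U ∨ K' ⊆ V) ∧ Essential K' E' := by
  rw [or_iff_not_imp_left]
  intro hn
  simp only [Essential, not_forall] at hn
  obtain ⟨F, G, hP, hn⟩ := hn
  push Not at hn
  choose U' V' hU' hV' hFU hGV hP' using fun e => (hP e).exists_open
  have hcut := h.cut hd U' V' _ _ hP' (fun e => subset_closure) (fun e => subset_closure)
  set K' := {q ∈ K | ∀ e ∈ E, q ∉ U' e ∧ q ∉ V' e} with hK'
  have hcl : IsClosed K' := by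
    have : K' = K ∩ (⋃ e ∈ E, U' e ∪ V' e)ᶜ := by
      ext q
      simp [hK']
    rw [this]
    exact hK.inter (isOpen_biUnion fun e _ => (hU' e).union (hV' e)).isClosed_compl
  have hsub : K' ⊆ U ∪ V := by
    intro q hq
    by_contra hqUV
    obtain ⟨e, he, h⟩ := hn q ⟨hq.1, hqUV⟩
    by_cases hF : q ∈ F e
    · exact (hq.2 e he).1 (hFU e hF)
    · exact (hq.2 e he).2 (hGV e (h hF))
  have e0 : K' ∩ U = K' ∩ Vᶜ := by
    ext q
    exact ⟨fun h => ⟨h.1, disjoint_left.1 hUV h.2⟩, fun h => ⟨h.1, (hsub h.1).resolve_right h.2⟩⟩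
  have e1 : K' ∩ V = K' ∩ Uᶜ := by
    ext q
    exact ⟨fun h => ⟨h.1, disjoint_right.1 hUV h.2⟩, fun h => ⟨h.1, (hsub h.1).resolve_left h.2⟩⟩
  have c0 : IsClosed (K' ∩ U) := e0 ▸ hcl.inter hV.isClosed_compl
  have c1 : IsClosed (K' ∩ V) := e1 ▸ hcl.inter hU.isClosed_compl
  have hun : K' ∩ U ∪ K' ∩ V = K' := by rw [← inter_union_distrib_left, inter_eq_left.2 hsub]
  rw [← hun] at hcut
  rcases hcut.of_union c0 c1 (hUV.mono inter_subset_right inter_subset_right) with h | h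
  · exact ⟨_, inter_subset_left.trans (sep_subset _ _), c0, Or.inl inter_subset_right, h⟩
  · exact ⟨_, inter_subset_left.trans (sep_subset _ _), c1, Or.inr inter_subset_right, h⟩

lemma isPair_slab {a b : unitInterval} (h0 : 0 ≤ a) (hab : a < b) (e : ℕ) :
    IsPair e {q | q e ≤ a} {q | b ≤ q e} := by
  refine ⟨isClosed_le (continuous_apply e) continuous_const,
    isClosed_le continuous_const (continuous_apply e), ?_, ?_, ?_⟩
  · exact disjoint_left.2 fun q h1 h2 => absurd (h2.trans h1) (not_le.2 hab)
  · intro q (hq : q e = 0)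
    simp [hq, h0]
  · intro q (hq : q e = 1)
    simp [hq, unitInterval.le_one']

/-- Restricting one coordinate to an interval costs only that coordinate. -/
lemma Essential.slab {K : Set Cube} {E : Set ℕ} {e : ℕ} (he : e ∈ E) (h : Essential K E)
    {a b : unitInterval} (hab : a < b) :
    Essential {q ∈ K | a ≤ q e ∧ q e ≤ b} (E \ {e}) := by
  have h' : Essential K ({e} ∪ E \ {e}) := h.mono (by simp [insert_eq_of_mem he])
  have := h'.cut disjoint_sdiff_right (fun e => {q | q e < a}) (fun e => {q | b < q e})
    _ _ (isPair_slab unitInterval.nonneg' hab) (fun e q hq => hq.out.le) (fun e q hq => hq.out.le)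
  simpa using this

/-! ### Separation by clopen and open sets -/

section
variable {T M : Type*} [TopologicalSpace T] [TopologicalSpace M]

/-- A clopen splitting `C`, `Cᶜ` of a subspace `T` of `M` that is compatible with neighbourhoods of
disjoint closed sets `A`, `B` extends to disjoint open subsets of `M`. Here `ι '' C ∪ A` and `ι ''
Cᶜ ∪ B` are separated sets, so complete normality applies. -/
lemma exists_separation [CompletelyNormalSpace M] {ι : T → M} (hι : Topology.IsInducing ι)
    {C : Set T} (hC : IsClopen C) {A B A' B' : Set M} (hA : IsClosed A) (hB : IsClosed B)
    (hAB : Disjoint A B) (hA' : IsOpen A') (hB' : IsOpen B') (hAA' : A ⊆ A') (hBB' : B ⊆ B')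
    (hAC : ι ⁻¹' A' ⊆ C) (hBC : ι ⁻¹' B' ⊆ Cᶜ) :
    ∃ U V : Set M, IsOpen U ∧ IsOpen V ∧ Disjoint U V ∧ A ⊆ U ∧ B ⊆ V ∧
      C ⊆ ι ⁻¹' U ∧ Cᶜ ⊆ ι ⁻¹' V := by
  have key : ∀ (D : Set T) (P Q Q' : Set M), IsClosed D → IsClosed P → Disjoint P Q → IsOpen Q' →
      Q ⊆ Q' → ι ⁻¹' Q' ⊆ Dᶜ → ι ⁻¹' P ⊆ D → Disjoint (closure (ι '' D ∪ P)) (ι '' Dᶜ ∪ Q) := by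
    intro D P Q Q' hD hP hPQ hQ' hQQ' hQD hPD
    rw [closure_union, hP.closure_eq, disjoint_left]
    rintro x (hx | hx) (⟨t, ht, rfl⟩ | hx')
    · have : t ∈ closure D := by rwa [hι.closure_eq_preimage_closure_image]
      exact ht (hD.closure_eq ▸ this)
    · obtain ⟨_, hy, t, ht, rfl⟩ := mem_closure_iff.1 hx Q' hQ' (hQQ' hx')
      exact hQD hy ht
    · exact ht (hPD hx)
    · exact disjoint_left.1 hPQ hx hx'
  have h1 := key C A B B' hC.isClosed hA hAB hB' hBB' hBC ((preimage_mono hAA').trans hAC)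
  have h2 := key Cᶜ B A A' hC.compl.isClosed hB hAB.symm hA' hAA' (by rwa [compl_compl])
    ((preimage_mono hBB').trans hBC)
  rw [compl_compl] at h2
  obtain ⟨U, V, hU, hV, hCU, hCV, hUV⟩ :=
    separatedNhds_iff_disjoint.2 (CompletelyNormalSpace.completely_normal h1 h2.symm)
  exact ⟨U, V, hU, hV, hUV, subset_union_right.trans hCU, subset_union_right.trans hCV,
    image_subset_iff.1 (subset_union_left.trans hCU),
    image_subset_iff.1 (subset_union_left.trans hCV)⟩

/-- Subspaces of the Cantor space are zero-dimensional in the strong sense that disjoint closed sets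
are separated by a clopen set. -/
lemma exists_isClopen_of_inducing {g : T → ℕ → Bool} (hg : Topology.IsInducing g) {F G : Set T}
    (hF : IsClosed F) (hG : IsClosed G) (hFG : Disjoint F G) :
    ∃ C, IsClopen C ∧ F ⊆ C ∧ G ⊆ Cᶜ := by
  classical
  have : Countable (TopologicalSpace.Clopens (ℕ → Bool)) :=
    TopologicalSpace.Clopens.countable_iff_secondCountable.2 inferInstance
  obtain ⟨W, hW⟩ := exists_surjective_nat (TopologicalSpace.Clopens (ℕ → Bool))
  let S : ℕ → Set T := fun k => g ⁻¹' (W k)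
  have hS : ∀ k, IsClopen (S k) := fun k => (W k).isClopen.preimage hg.continuous
  have small : ∀ x, ∀ O : Set T, IsOpen O → x ∈ O → ∃ k, x ∈ S k ∧ S k ⊆ O := by
    intro x O hO hx
    obtain ⟨O', hO', rfl⟩ := hg.isOpen_iff.1 hO
    obtain ⟨D, hD, hxD, hDO⟩ := isTopologicalBasis_isClopen.isOpen_iff.1 hO' _ hx
    obtain ⟨k, hk⟩ := hW ⟨D, hD⟩
    refine ⟨k, ?_, ?_⟩ <;> simp only [S, hk]
    exacts [hxD, preimage_mono hDO]
  let good : ℕ → Prop := fun k => S k ⊆ Fᶜ ∨ S k ⊆ Gᶜ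
  have hex : ∀ x, ∃ k, x ∈ S k ∧ good k := by
    intro x
    by_cases hx : x ∈ F
    · obtain ⟨k, hk, h⟩ := small x Gᶜ hG.isOpen_compl (disjoint_left.1 hFG hx)
      exact ⟨k, hk, Or.inr h⟩
    · obtain ⟨k, hk, h⟩ := small x Fᶜ hF.isOpen_compl hx
      exact ⟨k, hk, Or.inl h⟩
  -- `m x` is the first basic clopen set around `x` that misses `F` or misses `G`.
  let m : T → ℕ := fun x => Nat.find (hex x)
  have hm : IsLocallyConstant m := by
    rw [IsLocallyConstant.iff_isOpen_fiber]
    intro k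
    have : {x | m x = k} = {x | x ∈ S k ∧ good k} ∩ ⋂ j ∈ Finset.range k, {x | x ∈ S j ∧ good j}ᶜ := by
      ext x
      simp [m, Nat.find_eq_iff]
    have hcl : ∀ j, IsClopen {x | x ∈ S j ∧ good j} := by
      intro j
      by_cases hj : good j
      · simpa [hj] using hS j
      · simpa [hj] using isClopen_empty
    change IsOpen {x | m x = k}
    rw [this]
    exact (hcl k).isOpen.inter (isOpen_biInter_finset fun j _ => (hcl j).compl.isOpen)
  refine ⟨m ⁻¹' {k | S k ⊆ Gᶜ}, (isClopen_discrete _).preimage hm.continuous, fun x hx => ?_, fun x hx h => ?_⟩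
  · have := Nat.find_spec (hex x)
    exact this.2.resolve_left fun h => h this.1 hx
  · exact h (Nat.find_spec (hex x)).1 hx

end

/-! ### Countable covers of the Hilbert cube -/

/-- Dependent choice along `ℕ`, with an invariant `P` and a relation `R` between successive terms.
-/
lemma exists_seq {α : Type*} {P : ℕ → α → Prop} {R : ℕ → α → α → Prop} {a : α} (h0 : P 0 a)
    (h : ∀ n x, P n x → ∃ y, P (n + 1) y ∧ R n x y) :
    ∃ f : ℕ → α, ∀ n, P n (f n) ∧ R n (f n) (f (n + 1)) := by
  choose! g hg using h
  let f : ℕ → α := fun n => Nat.rec a (fun n x => g n x) n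
  have hf : ∀ n, P n (f n) := fun n => Nat.rec h0 (fun n ih => (hg n _ ih).1) n
  exact ⟨f, fun n => ⟨hf n, (hg n _ (hf n)).2⟩⟩

/-- A single point is removed by restricting one coordinate to a suitable interval. -/
lemma Essential.avoid_subsingleton {K S : Set Cube} {E : Set ℕ} (hK : IsClosed K)
    (hE : E.Infinite) (h : Essential K E) (hs : (K ∩ S).Subsingleton) :
    ∃ K' ⊆ K, IsClosed K' ∧ Disjoint K' S ∧ ∃ E', E'.Infinite ∧ Essential K' E' := by
  obtain ⟨e, he⟩ := hE.nonempty
  have main : ∀ a b : unitInterval, a < b → (∀ q ∈ K ∩ S, ¬ (a ≤ q e ∧ q e ≤ b)) →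
      ∃ K' ⊆ K, IsClosed K' ∧ Disjoint K' S ∧ ∃ E', E'.Infinite ∧ Essential K' E' := by
    intro a b hab hq
    refine ⟨{q ∈ K | a ≤ q e ∧ q e ≤ b}, sep_subset _ _, ?_, ?_, E \ {e},
      hE.sdiff (finite_singleton e), h.slab he hab⟩
    · exact hK.inter (isClosed_Icc.preimage (continuous_apply e))
    · exact disjoint_left.2 fun q h1 h2 => hq q ⟨h1.1, h2⟩ h1.2
  have hI : (⊥ : unitInterval) < ⊤ := bot_lt_top
  obtain ⟨b, hb0, hb1⟩ := exists_between hI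
  obtain ⟨c, hc0, hc1⟩ := exists_between hb1
  by_cases hex : ∃ q ∈ K ∩ S, q e ≤ b
  · obtain ⟨q, hq, hqb⟩ := hex
    refine main c ⊤ hc1 fun q' hq' h' => ?_
    rw [hs hq' hq] at h'
    exact absurd (h'.1.trans hqb) (not_le.2 hc0)
  · exact main ⊥ b hb0 fun q hq hqe => hex ⟨q, hq, hqe.2⟩

/-- If `S` maps continuously and injectively into the Cantor space, a closed set that is essential
in infinitely many directions can be shrunk to one that misses `S` and is still essential in
infinitely many directions. Split the directions into infinitely many infinite blocks and apply
`Essential.decide` to the bits of `p` in turn, spending one block on each bit. If the first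
alternative ever occurs, the set obtained misses `S`. Otherwise the intersection of the sets
obtained is essential in the directions of the block `0`, and `p` is constant on its part in `S`,
which is therefore at most one point. -/
lemma Essential.avoid {S K : Set Cube} {p : S → ℕ → Bool} (hp : Continuous p)
    (hinj : Function.Injective p) {E : Set ℕ} (hK : IsClosed K) (hE : E.Infinite)
    (h : Essential K E) :
    ∃ K' ⊆ K, IsClosed K' ∧ Disjoint K' S ∧ ∃ E', E'.Infinite ∧ Essential K' E' := by
  have hsep : ∀ i, ∃ U V : Set Cube, IsOpen U ∧ IsOpen V ∧ Disjoint U V ∧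
      ∀ x : S, (p x i = true → (x : Cube) ∈ U) ∧ (p x i = false → (x : Cube) ∈ V) := by
    intro i
    have hC : IsClopen {x : S | p x i = true} :=
      (isClopen_discrete {true}).preimage ((continuous_apply i).comp hp)
    obtain ⟨U, V, hU, hV, hUV, -, -, h1, h2⟩ := exists_separation Topology.IsInducing.subtypeVal hC
      isClosed_empty isClosed_empty (disjoint_empty _) isOpen_empty isOpen_empty
      subset_rfl subset_rfl (by simp) (by simp)
    exact ⟨U, V, hU, hV, hUV, fun x => ⟨fun hx => h1 hx, fun hx => h2 (by simp [hx])⟩⟩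
  choose U V hU hV hUV hpUV using hsep
  let ψ : ℕ → ℕ := fun k => hE.natEmbedding E k
  have hψ : Function.Injective ψ := fun a b hab =>
    (hE.natEmbedding E).injective (Subtype.ext hab)
  let block : ℕ → Set ℕ := fun k => range fun m => ψ (Nat.pair k m)
  have hblock : ∀ k, (block k).Infinite := fun k =>
    infinite_range_of_injective fun a b hab => by simpa using hψ hab
  -- `R i` consists of the reserved block `0` and the blocks not yet spent before step `i`.
  let R : ℕ → Set ℕ := fun i => {x | ∃ k, (k = 0 ∨ i < k) ∧ x ∈ block k}
  have hR : ∀ i, block (i + 1) ∪ R (i + 1) ⊆ R i := by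
    rintro i x (hx | ⟨k, hk, hx⟩)
    · exact ⟨i + 1, Or.inr (by omega), hx⟩
    · exact ⟨k, hk.imp_right (by omega), hx⟩
  have hRd : ∀ i, Disjoint (block (i + 1)) (R (i + 1)) := by
    intro i
    rw [disjoint_left]
    rintro _ ⟨m, rfl⟩ ⟨k, hk, m', hm⟩
    have := hψ hm
    simp only [Nat.pair_eq_pair] at this
    omega
  by_contra hcon
  obtain ⟨f, hf⟩ := exists_seq (P := fun i L => IsClosed L ∧ L ⊆ K ∧ Essential L (R i))
    (R := fun i L L' => L' ⊆ L ∧ (L' ⊆ U i ∨ L' ⊆ V i)) (a := K)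
    ⟨hK, subset_rfl, h.mono (by rintro _ ⟨k, -, m, rfl⟩; exact (hE.natEmbedding E _).2)⟩
    (by
      rintro i L ⟨hL, hLK, hLE⟩
      rcases (hLE.mono (hR i)).decide hL (hU i) (hV i) (hUV i) (hRd i) with hess | hess
      · refine absurd ⟨_, sdiff_subset.trans hLK,
          hL.inter ((hU i).union (hV i)).isClosed_compl, ?_, _, hblock (i + 1), hess⟩ hcon
        refine disjoint_left.2 fun x hx hxS => hx.2 ?_
        have := hpUV i ⟨x, hxS⟩
        cases hb : p ⟨x, hxS⟩ i
        exacts [Or.inr (this.2 hb), Or.inl (this.1 hb)]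
      · obtain ⟨L', hL', hcl, hUV', hess⟩ := hess
        exact ⟨L', ⟨hcl, hL'.trans hLK, hess⟩, hL', hUV'⟩)
  have hess : Essential (⋂ i, f i) (block 0) :=
    Essential.iInter (fun i => (hf i).1.1) (fun i => (hf i).2.1)
      (fun i => (hf i).1.2.2.mono fun x hx => ⟨0, Or.inl rfl, hx⟩)
  obtain ⟨K', hK', hcl, hd, E', hE', hess'⟩ := hess.avoid_subsingleton (S := S)
    (isClosed_iInter fun i => (hf i).1.1) (hblock 0) (by
      rintro x ⟨hx, hxS⟩ y ⟨hy, hyS⟩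
      have : (⟨x, hxS⟩ : S) = ⟨y, hyS⟩ := by
        apply hinj
        funext i
        have hx' := mem_iInter.1 hx (i + 1)
        have hy' := mem_iInter.1 hy (i + 1)
        have hxi := hpUV i ⟨x, hxS⟩
        have hyi := hpUV i ⟨y, hyS⟩
        have hd := disjoint_left.1 (hUV i)
        rcases (hf i).2.2 with h | h
        · have h1 : p ⟨x, hxS⟩ i = true := by
            by_contra hb
            exact hd (h hx') (hxi.2 (by simpa using hb))
          have h2 : p ⟨y, hyS⟩ i = true := by
            by_contra hb
            exact hd (h hy') (hyi.2 (by simpa using hb))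
          rw [h1, h2]
        · have h1 : p ⟨x, hxS⟩ i = false := by
            by_contra hb
            exact hd (hxi.1 (by simpa using hb)) (h hx')
          have h2 : p ⟨y, hyS⟩ i = false := by
            by_contra hb
            exact hd (hyi.1 (by simpa using hb)) (h hy')
          rw [h1, h2]
      exact congrArg Subtype.val this)
  exact hcon ⟨K', hK'.trans ((iInter_subset f 0).trans (hf 0).1.2.1), hcl, hd, E', hE', hess'⟩

/-- The Hilbert cube is not a countable union of sets having continuous injections into the Cantor
space. -/
theorem cube_not_countable_union (A : ℕ → Set Cube) (p : ∀ n, A n → ℕ → Bool)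
    (hp : ∀ n, Continuous (p n)) (hinj : ∀ n, Function.Injective (p n)) : (⋃ n, A n) ≠ univ := by
  intro hA
  obtain ⟨f, hf⟩ := exists_seq
    (P := fun (_ : ℕ) (L : Set Cube × Set ℕ) => IsClosed L.1 ∧ L.2.Infinite ∧ Essential L.1 L.2)
    (R := fun n L L' => L'.1 ⊆ L.1 ∧ Disjoint L'.1 (A n)) (a := (univ, univ))
    ⟨isClosed_univ, infinite_univ, essential_univ⟩
    (by
      rintro n ⟨K, E⟩ ⟨hK, hE, h⟩
      obtain ⟨K', h1, h2, h3, E', h4, h5⟩ := h.avoid (hp n) (hinj n) hK hE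
      exact ⟨(K', E'), ⟨h2, h4, h5⟩, h1, h3⟩)
  obtain ⟨q, hq⟩ := IsCompact.nonempty_iInter_of_sequence_nonempty_isCompact_isClosed
    (fun n => (f n).1) (fun n => (hf n).2.1) (fun n => (hf n).1.2.2.nonempty)
    (hf 0).1.1.isCompact (fun n => (hf n).1.1)
  obtain ⟨n, hn⟩ := mem_iUnion.1 (hA ▸ mem_univ q)
  exact disjoint_left.1 (hf n).2.2 (mem_iInter.1 hq (n + 1)) hn

/-! ### The space of lexicographic minima -/

/-- The ambient compact space containing the example. -/
abbrev Amb : Type := (ℕ → Bool) × Cube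

/-- A nonempty closed subset of the cube has a lexicographically minimal element: minimize the
coordinates one after the other. -/
lemma exists_isLexMin {K : Set Cube} (hK : IsClosed K) (hne : K.Nonempty) :
    ∃ q ∈ K, ∀ n, ∀ r ∈ K, (∀ i < n, r i = q i) → q n ≤ r n := by
  -- `C n` is the set of points of `K` whose first `n` coordinates are successively minimal.
  let C : ℕ → Set Cube := fun n =>
    Nat.rec K (fun n D => {r ∈ D | ∀ r' ∈ D, r n ≤ r' n}) n
  have hC : ∀ n, C (n + 1) = {r ∈ C n | ∀ r' ∈ C n, r n ≤ r' n} := fun n => rfl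
  have hcl : ∀ n, IsClosed (C n) := by
    intro n
    induction n with
    | zero => exact hK
    | succ n ih =>
      have : C (n + 1) = C n ∩ ⋂ r' ∈ C n, {r | r n ≤ r' n} := by
        ext r
        simp [hC]
      rw [this]
      exact ih.inter (isClosed_biInter fun r' _ => isClosed_le (continuous_apply n) continuous_const)
  have hnonempty : ∀ n, (C n).Nonempty := by
    intro n
    induction n with
    | zero => exact hne
    | succ n ih =>
      obtain ⟨r, hr, hmin⟩ := (hcl n).isCompact.exists_isMinOn ih
        (continuous_apply n : Continuous fun r : Cube => r n).continuousOn
      exact ⟨r, hr, fun r' hr' => hmin hr'⟩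
  obtain ⟨q, hq⟩ := IsCompact.nonempty_iInter_of_sequence_nonempty_isCompact_isClosed C
    (fun n => sep_subset _ _) hnonempty (hcl 0).isCompact hcl
  rw [mem_iInter] at hq
  -- `C n` contains every point of `K` agreeing with `q` below `n`.
  have hagree : ∀ n, ∀ r ∈ K, (∀ i < n, r i = q i) → r ∈ C n := by
    intro n r hr
    induction n with
    | zero => exact fun _ => hr
    | succ n ih =>
      intro h
      refine ⟨ih fun i hi => h i (by omega), fun r' hr' => ?_⟩
      rw [h n n.lt_succ_self]
      exact (hq (n + 1)).2 r' hr'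
  exact ⟨q, hq 0, fun n r hr h => (hq (n + 1)).2 r (hagree n r hr h)⟩

/-- The universal closed set coded by `B`: the section over `x` is the section over `x` of the
complement of the union of the `B k` with `x k = true`. -/
def UnivClosed (B : ℕ → Set Amb) : Set Amb := {z | ∀ k, z.1 k = true → z ∉ B k}

/-- The points `(x, q)` such that some `r` in the section over `x` agrees with `q` below `n` and is
smaller than `q` at `n` by at least `1 / (m + 1)`. The quantitative gap makes this set closed. -/
def Bad (B : ℕ → Set Amb) (n m : ℕ) : Set Amb :=
  {z | ∃ r : Cube, (z.1, r) ∈ UnivClosed B ∧ (∀ i < n, r i = z.2 i) ∧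
    (r n : ℝ) + 1 / ((m : ℝ) + 1) ≤ z.2 n}

/-- The example: the points `(x, q)` for which `q` is the lexicographic minimum of the section of
`UnivClosed B` over `x` (see `mem_lexMin_iff`). -/
def LexMin (B : ℕ → Set Amb) : Set Amb := {z ∈ UnivClosed B | ∀ n m, z ∉ Bad B n m}

variable {B : ℕ → Set Amb}

lemma isClosed_univClosed (hB : ∀ k, IsOpen (B k)) : IsClosed (UnivClosed B) := by
  have : UnivClosed B = ⋂ k, ({z | z.1 k = true} ∩ B k)ᶜ := by
    ext z
    simp [UnivClosed]
  rw [this]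
  refine isClosed_iInter fun k => IsOpen.isClosed_compl (IsOpen.inter ?_ (hB k))
  exact (isOpen_discrete ({true} : Set Bool)).preimage
    ((continuous_apply k).comp continuous_fst : Continuous fun z : Amb => z.1 k)

/-- `Bad B n m` is the projection of a closed set along the compact space `Cube`. -/
lemma isClosed_bad (hB : ∀ k, IsOpen (B k)) (n m : ℕ) : IsClosed (Bad B n m) := by
  let D : Set (Amb × Cube) := {w | (w.1.1, w.2) ∈ UnivClosed B} ∩
    ((⋂ i ∈ Iio n, {w | w.2 i = w.1.2 i}) ∩
      {w | (w.2 n : ℝ) + 1 / ((m : ℝ) + 1) ≤ w.1.2 n})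
  have hD : IsClosed D := by
    refine IsClosed.inter ((isClosed_univClosed hB).preimage (by fun_prop)) (IsClosed.inter
      (isClosed_biInter fun i _ => isClosed_eq (by fun_prop) (by fun_prop))
      (isClosed_le (by fun_prop) (by fun_prop)))
  have : Bad B n m = Prod.fst '' D := by
    ext z
    simp only [Bad, D, mem_ofPred_eq, mem_image, Prod.exists, exists_and_right, exists_eq_right,
      mem_inter_iff, mem_iInter, mem_Iio]
  rw [this]
  exact isClosedMap_fst_of_compactSpace D hD

lemma mem_lexMin_iff {z : Amb} : z ∈ LexMin B ↔ z ∈ UnivClosed B ∧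
    ∀ n, ∀ r : Cube, (z.1, r) ∈ UnivClosed B → (∀ i < n, r i = z.2 i) → z.2 n ≤ r n := by
  refine and_congr_right fun _ => forall_congr' fun n => ⟨fun h r hr hri => ?_, ?_⟩
  · by_contra! hlt
    have hlt' : (0 : ℝ) < z.2 n - r n := sub_pos.2 hlt
    obtain ⟨m, hm⟩ := exists_nat_one_div_lt hlt'
    exact h m ⟨r, hr, hri, by linarith⟩
  · rintro h m ⟨r, hr, hri, hle⟩
    have h1 : (z.2 n : ℝ) ≤ r n := h r hr hri
    have h2 : (0 : ℝ) < 1 / ((m : ℝ) + 1) := by positivity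
    linarith

lemma injective_fst : Function.Injective fun z : LexMin B => (z : Amb).1 := by
  rintro ⟨⟨x, q⟩, hq⟩ ⟨⟨x', r⟩, hr⟩ (h : x = x')
  subst h
  rw [mem_lexMin_iff] at hq hr
  have : ∀ n, q n = r n := by
    intro n
    induction n using Nat.strong_induction_on with
    | _ n ih =>
      exact le_antisymm (hq.2 n r hr.1 fun i hi => (ih i hi).symm) (hr.2 n q hq.1 ih)
  obtain rfl : q = r := funext this
  rfl

lemma exists_mem_lexMin (hB : ∀ k, IsOpen (B k)) {x : ℕ → Bool} (h : ∃ q, (x, q) ∈ UnivClosed B) :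
    ∃ q, (x, q) ∈ LexMin B := by
  obtain ⟨q, hq, hmin⟩ := exists_isLexMin (K := {q | (x, q) ∈ UnivClosed B})
    ((isClosed_univClosed hB).preimage (by fun_prop)) h
  exact ⟨q, mem_lexMin_iff.2 ⟨hq, hmin⟩⟩

/-- A countable intersection of open sets with a closed set is Polish, being homeomorphic to a
closed subspace of `M × ∏ i, O i`. -/
lemma polishSpace_sep {M : Type*} [TopologicalSpace M] [PolishSpace M] {ι : Type*} [Countable ι]
    {F : Set M} (hF : IsClosed F) {O : ι → Set M} (hO : ∀ i, IsOpen (O i)) :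
    PolishSpace ↥(F ∩ ⋂ i, O i) := by
  have : ∀ i, PolishSpace (O i) := fun i => (hO i).polishSpace
  let f : ↥(F ∩ ⋂ i, O i) → M × ∀ i, O i := fun z => (z, fun i => ⟨z, mem_iInter.1 z.2.2 i⟩)
  have hf : Continuous f := continuous_subtype_val.prodMk
    (continuous_pi fun i => continuous_subtype_val.subtype_mk _)
  have hemb : Topology.IsEmbedding f :=
    Topology.IsEmbedding.of_comp hf continuous_fst Topology.IsEmbedding.subtypeVal
  have hrange : range f = {w | w.1 ∈ F} ∩ ⋂ i, {w | (w.2 i : M) = w.1} := by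
    ext ⟨x, y⟩
    simp only [mem_range, mem_inter_iff, mem_ofPred_eq, mem_iInter]
    constructor
    · rintro ⟨z, hz⟩
      obtain ⟨rfl, rfl⟩ := Prod.mk.inj hz
      exact ⟨z.2.1, fun i => rfl⟩
    · rintro ⟨hx, hy⟩
      exact ⟨⟨x, hx, mem_iInter.2 fun i => hy i ▸ (y i).2⟩,
        Prod.ext rfl (funext fun i => Subtype.ext (hy i).symm)⟩
  have hcl : IsClosed (range f) := by
    rw [hrange]
    exact (hF.preimage continuous_fst).inter (isClosed_iInter fun i =>
      isClosed_eq (by fun_prop) continuous_fst)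
  exact Topology.IsClosedEmbedding.polishSpace ⟨hemb, hcl⟩

lemma polishSpace_lexMin (hB : ∀ k, IsOpen (B k)) : PolishSpace (LexMin B) := by
  have : PolishSpace Amb := {}
  have h := polishSpace_sep (isClosed_univClosed hB)
    (O := fun i : ℕ × ℕ => (Bad B i.1 i.2)ᶜ) fun i => (isClosed_bad hB _ _).isOpen_compl
  have : LexMin B = UnivClosed B ∩ ⋂ i : ℕ × ℕ, (Bad B i.1 i.2)ᶜ := by
    ext z
    simp [LexMin]
  rwa [← this] at h

/-- The first projection is a continuous injection of `LexMin B` into the Cantor space. -/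
lemma not_sigmaEmbeddable_cube : ¬ SigmaEmbeddable Cube (LexMin B) := by
  rintro ⟨A, hA, h⟩
  choose D e using h
  refine cube_not_countable_union A (fun n a => ((e n).some a : LexMin B).1.1) (fun n => ?_)
    (fun n => ?_) hA
  · exact continuous_fst.comp (continuous_subtype_val.comp
      (continuous_subtype_val.comp (e n).some.continuous))
  · exact injective_fst.comp (Subtype.val_injective.comp (e n).some.injective)

/-- If `T` embeds into both the ambient space and the Cantor space, then there is a partition
between the faces `q n = 0` and `q n = 1` of the ambient space that misses the image of `T`. -/
lemma exists_partition {T : Type*} [TopologicalSpace T] {ι : T → Amb} (hι : Topology.IsInducing ι)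
    {g : T → ℕ → Bool} (hg : Topology.IsInducing g) (n : ℕ) :
    ∃ U V : Set Amb, IsOpen U ∧ IsOpen V ∧ Disjoint U V ∧ Prod.snd ⁻¹' face 0 n ⊆ U ∧
      Prod.snd ⁻¹' face 1 n ⊆ V ∧ range ι ⊆ U ∪ V := by
  obtain ⟨U₀, V₀, hU₀, hV₀, hFU, hGV, hP⟩ := (isPair_default n).exists_open
  have hcont : Continuous (Prod.snd : Amb → Cube) := continuous_snd
  obtain ⟨C, hC, hC0, hC1⟩ := exists_isClopen_of_inducing hg
    ((hP.closed_left.preimage hcont).preimage hι.continuous)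
    ((hP.closed_right.preimage hcont).preimage hι.continuous)
    ((hP.disj.preimage _).preimage _)
  obtain ⟨U, V, hU, hV, hUV, h0, h1, hCU, hCV⟩ := exists_separation hι hC
    ((isClosed_face 0 n).preimage hcont) ((isClosed_face 1 n).preimage hcont)
    ((isPair_default n).disj.preimage _) (hU₀.preimage hcont) (hV₀.preimage hcont)
    (preimage_mono hFU) (preimage_mono hGV)
    ((preimage_mono (preimage_mono subset_closure)).trans hC0)
    ((preimage_mono (preimage_mono subset_closure)).trans hC1)
  refine ⟨U, V, hU, hV, hUV, h0, h1, ?_⟩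
  rintro _ ⟨t, rfl⟩
  by_cases ht : t ∈ C
  exacts [Or.inl (hCU ht), Or.inr (hCV ht)]

/-- If `LexMin B` were covered by countably many pieces embeddable into the Cantor space, there
would be partitions in all directions, the `n`-th of which misses the `n`-th piece. Let `O` be the
open set of points outside at least one of the partitions, and let `c` be the code of `O` with
respect to the basis `B`. The section of `UnivClosed B` over `c` is nonempty by the partition
theorem, and its lexicographic minimum gives a point of `LexMin B` outside `O`, hence in no piece.
-/
lemma not_sigmaEmbeddable_cantor (hB : ∀ k, IsOpen (B k))
    (hbasis : TopologicalSpace.IsTopologicalBasis (range B)) :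
    ¬ SigmaEmbeddable (LexMin B) (ℕ → Bool) := by
  classical
  rintro ⟨A, hA, h⟩
  choose D e using h
  have hpart := fun n => exists_partition
    (Topology.IsInducing.subtypeVal.comp
      (Topology.IsInducing.subtypeVal : Topology.IsInducing (Subtype.val : A n → LexMin B)))
    (Topology.IsInducing.subtypeVal.comp (e n).some.isInducing) n
  choose U V hU hV hUV h0 h1 hsub using hpart
  let O : Set Amb := ⋃ n, U n ∪ V n
  have hO : IsOpen O := isOpen_iUnion fun n => (hU n).union (hV n)
  let c : ℕ → Bool := fun k => decide (B k ⊆ O)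
  -- Since `B` enumerates a basis, the `B k` inside `O` have union `O`.
  have hmem : ∀ q, (c, q) ∈ UnivClosed B ↔ (c, q) ∉ O := by
    intro q
    constructor
    · intro h hq
      obtain ⟨_, ⟨k, rfl⟩, hk, hkO⟩ := hbasis.isOpen_iff.1 hO _ hq
      exact h k (by simpa [c] using hkO) hk
    · intro h k hk hqk
      exact h ((by simpa [c] using hk : B k ⊆ O) hqk)
  have hsec : Continuous fun q : Cube => (c, q) := by fun_prop
  obtain ⟨q, hq⟩ := exists_notMem_partitions (fun n => (fun q => (c, q)) ⁻¹' U n)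
    (fun n => (fun q => (c, q)) ⁻¹' V n) (fun n => (hU n).preimage hsec)
    (fun n => (hV n).preimage hsec) (fun n => (hUV n).preimage _)
    (fun n q hq => h0 n hq) (fun n q hq => h1 n hq)
  obtain ⟨r, hr⟩ := exists_mem_lexMin hB ⟨q, (hmem q).2 fun h => by
    obtain ⟨n, h | h⟩ := mem_iUnion.1 h
    exacts [(hq n).1 h, (hq n).2 h]⟩
  obtain ⟨n, hn⟩ := mem_iUnion.1 (hA ▸ mem_univ (⟨(c, r), hr⟩ : LexMin B))
  exact (hmem r).1 hr.1 (mem_iUnion.2 ⟨n, hsub n ⟨⟨_, hn⟩, rfl⟩⟩)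

lemma sigmaEmbeddable_of_countable {X Y : Type*} [TopologicalSpace X] [TopologicalSpace Y]
    [Countable X] [Nonempty Y] : SigmaEmbeddable X Y := by
  obtain ⟨f, hf⟩ := exists_injective_nat X
  let y : Y := Classical.arbitrary Y
  refine ⟨fun n => f ⁻¹' {n}, ?_, fun n => ?_⟩
  · ext x
    simp
  · have : Subsingleton (f ⁻¹' {n}) :=
      ⟨fun a b => Subtype.ext (hf (a.2.trans b.2.symm))⟩
    refine ⟨range fun _ : f ⁻¹' {n} => y, ⟨?_⟩⟩
    have : Subsingleton (range fun _ : f ⁻¹' {n} => y) :=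
      ⟨by rintro ⟨_, a, rfl⟩ ⟨_, b, rfl⟩; rfl⟩
    exact
      { toFun := fun a => ⟨y, a, rfl⟩
        invFun := fun b => b.2.choose
        left_inv := fun _ => Subsingleton.elim _ _
        right_inv := fun _ => Subsingleton.elim _ _
        continuous_toFun := continuous_of_const fun _ _ => rfl
        continuous_invFun := continuous_of_const fun _ _ => Subsingleton.elim _ _ }

/-- Countable spaces are σ-embeddable into the Cantor space, so the space is uncountable and the
perfect set theorem provides a copy of the Cantor space. -/
lemma exists_isEmbedding_of_not_sigmaEmbeddable {X : Type*} [TopologicalSpace X] [PolishSpace X]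
    (h : ¬ SigmaEmbeddable X (ℕ → Bool)) : ∃ f : (ℕ → Bool) → X, Topology.IsEmbedding f := by
  have hunc : ¬ (univ : Set X).Countable := fun hc => by
    have := countable_univ_iff.1 hc
    exact h sigmaEmbeddable_of_countable
  obtain ⟨f, -, hf, hinj⟩ := isClosed_univ.exists_nat_bool_injection_of_not_countable hunc
  exact ⟨f, (hf.isClosedEmbedding hinj).isEmbedding⟩

end HC

theorem stmt0 :
    ∃ (X : Type) (tX : TopologicalSpace X),
      @PolishSpace X tX ∧
      (∃ f : (ℕ → Bool) → X, @Topology.IsEmbedding _ _ _ tX f) ∧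
      ¬ @SigmaEmbeddable X (ℕ → Bool) tX _ ∧
      ¬ @SigmaEmbeddable (ℕ → unitInterval) X _ tX := by
  have hb := TopologicalSpace.isBasis_countableBasis HC.Amb
  obtain ⟨B, hB⟩ := (TopologicalSpace.countable_countableBasis HC.Amb).exists_eq_range
    (nonempty_iff_ne_empty.2 fun h => empty_ne_univ (by simpa [h] using hb.sUnion_eq))
  rw [hB] at hb
  have hopen : ∀ k, IsOpen (B k) := fun k => hb.isOpen (mem_range_self k)
  have := HC.polishSpace_lexMin hopen
  have hcantor := HC.not_sigmaEmbeddable_cantor hopen hb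
  exact ⟨HC.LexMin B, inferInstance, this, HC.exists_isEmbedding_of_not_sigmaEmbeddable hcantor,
    hcantor, HC.not_sigmaEmbeddable_cube⟩
end

section
/- Every Polish space is σ-homeomorphic to a compact metrizable space: for every Polish space X there exists a compact metrizable topological space K such that X and K are σ-homeomorphic. -/
/-!
The empty space is compact. For countable nonempty `X` the one-point space works, because the
covering sets need not be disjoint.

Let `X` be uncountable. Embed `X` in a compact metric space `Q` as a dense subset; completeness
gives `X = ⋂ m, U m` with `U m` open. For each `m` take a point-finite countable open cover of
`U m` by sets of diameter less than `1 / (m + 1)`, and for each member of the cover a continuous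
real function on `Q` that is nonzero exactly on that member. All these functions together form a
continuous map `Φ : Q → (ℕ × ℕ → ℝ)`. With the `U m` decreasing:

* a point outside `X` lies in only finitely many `U m`, hence its image has finite support;
* a point of `X` lies in every `U m`, so the functions of stage `m` separate it from every point at
  distance at least `1 / (m + 1)`. Thus `Φ ⁻¹' {Φ x} = {x}` for `x ∈ X`, and since `Φ` is a closed
  map its restriction to `X` is an embedding.

The compact space is `K = Φ(Q)`. It is the union of `Φ(X)`, a copy of `X`, and of a set of finitely
supported sequences. The latter splits into countably many pieces according to which coordinates
are irrational and what the values of the rational ones are. Each piece embeds in the Cantor space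
by recording all Dedekind cuts of the coordinates, and the uncountable Polish space `X` contains a
Cantor set.
-/

open Set

/-- `X` and `Y` are σ-homeomorphic: there are countable covers `(A n)` of `X` and `(B n)`
of `Y` such that `A n` (with subspace topology) is homeomorphic to `B n` for every `n`. -/
def SigmaHomeomorphic (X : Type*) (Y : Type*) [TopologicalSpace X] [TopologicalSpace Y] : Prop :=
  ∃ (A : ℕ → Set X) (B : ℕ → Set Y),
    (⋃ n, A n) = univ ∧ (⋃ n, B n) = univ ∧ ∀ n, Nonempty (↥(A n) ≃ₜ ↥(B n))

open Filter Topology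

/-- If `K` is covered by a copy of `X` and countably many pieces that embed in `X`, then `X` and
`K` are σ-homeomorphic. -/
lemma sigmaHomeomorphic_of_cover {X K ι : Type*} [TopologicalSpace X] [TopologicalSpace K]
    [Countable ι] (h : X → K) (hh : IsEmbedding h) (P : ι → Set K)
    (hP : ∀ i, ∃ g : P i → X, IsEmbedding g)
    (hc : ∀ k, k ∈ range h ∨ ∃ i, k ∈ P i) : SigmaHomeomorphic X K := by
  choose g hg using hP
  obtain ⟨s, hs⟩ := exists_surjective_nat (Option ι)
  let A : Option ι → Set X := fun o => o.elim univ (fun i => range (g i))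
  let B : Option ι → Set K := fun o => o.elim (range h) P
  refine ⟨fun n => A (s n), fun n => B (s n), ?_, ?_, fun n => ?_⟩
  · obtain ⟨n, hn⟩ := hs none
    refine eq_univ_of_forall fun x => mem_iUnion.2 ⟨n, ?_⟩
    simp [A, hn]
  · refine eq_univ_of_forall fun k => mem_iUnion.2 ?_
    rcases hc k with hk | ⟨i, hk⟩
    · obtain ⟨n, hn⟩ := hs none
      exact ⟨n, by simpa [B, hn] using hk⟩
    · obtain ⟨n, hn⟩ := hs (some i)
      exact ⟨n, by simpa [B, hn] using hk⟩
  · change Nonempty (A (s n) ≃ₜ B (s n))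
    rcases s n with _ | i
    · exact ⟨(Homeomorph.Set.univ X).trans hh.toHomeomorph⟩
    · exact ⟨(hg i).toHomeomorph.symm⟩

/-! ### Finitely supported sequences -/

/-- The sequences whose irrational coordinates are exactly those in `c.2` and whose other
coordinates are given by `c.1`. -/
def ratPiece {I : Type*} (c : (I →₀ ℚ) × Finset I) : Set (I → ℝ) :=
  {z | ∀ i, (i ∈ c.2 ∧ Irrational (z i)) ∨ (i ∉ c.2 ∧ z i = c.1 i)}

lemma exists_mem_ratPiece {I : Type*} (z : I → ℝ) (hz : {i | z i ≠ 0}.Finite) :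
    ∃ c, z ∈ ratPiece c := by
  classical
  have hq : ∀ i, ∃ q : ℚ, (Irrational (z i) ∧ q = 0) ∨ (¬ Irrational (z i) ∧ (q : ℝ) = z i) := by
    intro i
    by_cases h : Irrational (z i)
    · exact ⟨0, .inl ⟨h, rfl⟩⟩
    · obtain ⟨q, hq⟩ := not_not.1 h
      exact ⟨q, .inr ⟨h, hq⟩⟩
  choose q hq using hq
  have hqz : ∀ i, q i ≠ 0 → i ∈ hz.toFinset := by
    intro i hi
    rcases hq i with ⟨-, h⟩ | ⟨-, h⟩
    · exact absurd h hi
    · simpa [← h] using hi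
  refine ⟨(Finsupp.onFinset hz.toFinset q hqz, hz.toFinset.filter fun i => Irrational (z i)), ?_⟩
  intro i
  rcases hq i with ⟨h, -⟩ | ⟨h, h'⟩
  · left
    simpa [h] using h.ne_zero
  · right
    simp [h, h']

/-- The Dedekind cuts of all coordinates of a sequence. -/
noncomputable def cuts {I : Type*} (z : I → ℝ) (p : I × ℚ) : Bool :=
  open Classical in decide (z p.1 < p.2)

/-- Any set of sequences on which `cuts` is continuous is embedded by it: a coordinate can be
recovered continuously from its cut. -/
lemma isEmbedding_cuts {I : Type*} (P : Set (I → ℝ))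
    (hP : Continuous fun z : P => cuts z.1) : IsEmbedding fun z : P => cuts z.1 := by
  have key : ∀ z : P, ∀ i (q : ℚ), cuts z.1 (i, q) = true ↔ z.1 i < q := by simp [cuts]
  have key' : ∀ z : P, ∀ i (q : ℚ), cuts z.1 (i, q) = false ↔ q ≤ z.1 i := by simp [cuts]
  refine ⟨⟨le_antisymm (continuous_iff_le_induced.1 hP) ?_⟩, ?_⟩
  · let t : TopologicalSpace P := TopologicalSpace.induced (fun z : P => cuts z.1) inferInstance
    change t ≤ _
    rw [instTopologicalSpaceSubtype, ← continuous_iff_le_induced]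
    have hc : Continuous[t, _] fun z : P => cuts z.1 := continuous_induced_dom
    have hop : ∀ i (q : ℚ) b, IsOpen[t] {z : P | cuts z.1 (i, q) = b} := fun i q b =>
      (isOpen_discrete {b}).preimage ((continuous_apply (i, q)).comp hc)
    refine continuous_pi fun i => ?_
    rw [OrderTopology.continuous_iff]
    intro a
    constructor
    · have : (fun z : P => z.1 i) ⁻¹' Ioi a
          = ⋃ q : ℚ, ⋃ _ : a < q, {z : P | cuts z.1 (i, q) = false} := by
        ext z
        simp only [mem_preimage, mem_Ioi, mem_iUnion, mem_ofPred_eq, key', exists_prop]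
        constructor
        · intro h
          obtain ⟨q, h1, h2⟩ := exists_rat_btwn h
          exact ⟨q, h1, h2.le⟩
        · rintro ⟨q, h1, h2⟩
          exact h1.trans_le h2
      rw [this]
      exact isOpen_iUnion fun q => isOpen_iUnion fun _ => hop i q false
    · have : (fun z : P => z.1 i) ⁻¹' Iio a
          = ⋃ q : ℚ, ⋃ _ : q < a, {z : P | cuts z.1 (i, q) = true} := by
        ext z
        simp only [mem_preimage, mem_Iio, mem_iUnion, mem_ofPred_eq, key, exists_prop]
        constructor
        · intro h
          obtain ⟨q, h1, h2⟩ := exists_rat_btwn h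
          exact ⟨q, h2, h1⟩
        · rintro ⟨q, h1, h2⟩
          exact h2.trans h1
      rw [this]
      exact isOpen_iUnion fun q => isOpen_iUnion fun _ => hop i q true
  · intro z w hzw
    have hzw' : ∀ i (q : ℚ), z.1 i < q ↔ w.1 i < q := fun i q => by
      rw [← key, ← key]
      exact iff_of_eq (congrArg (· = true) (congrFun hzw (i, q)))
    ext i
    refine le_antisymm (le_of_forall_rat_lt_imp_le fun q hq => ?_)
      (le_of_forall_rat_lt_imp_le fun q hq => ?_)
    · exact not_lt.1 fun h => hq.not_gt ((hzw' i q).2 h)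
    · exact not_lt.1 fun h => hq.not_gt ((hzw' i q).1 h)

lemma continuous_cuts_ratPiece {I : Type*} (c : (I →₀ ℚ) × Finset I) :
    Continuous fun z : ratPiece c => cuts z.1 := by
  refine continuous_pi fun ⟨i, q⟩ => ?_
  have hci : Continuous fun z : ratPiece c => z.1 i :=
    (continuous_apply i).comp continuous_subtype_val
  by_cases hi : i ∈ c.2
  · -- An irrational coordinate avoids `q`, so `{z i < q}` is clopen.
    have hirr : ∀ z : ratPiece c, z.1 i ≠ q := fun z => by
      have := z.2 i
      simp only [hi, true_and, not_true, false_and, or_false] at this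
      exact this.ne_rat q
    refine continuous_discrete_rng.2 fun b => ?_
    cases b
    · have : (fun z : ratPiece c => cuts z.1 (i, q)) ⁻¹' {false} = {z | (q : ℝ) < z.1 i} := by
        ext z
        simpa [cuts] using (hirr z).symm.le_iff_lt
      rw [this]
      exact isOpen_lt continuous_const hci
    · have : (fun z : ratPiece c => cuts z.1 (i, q)) ⁻¹' {true} = {z | z.1 i < (q : ℝ)} := by
        ext z
        simp [cuts]
      rw [this]
      exact isOpen_lt hci continuous_const
  · have : (fun z : ratPiece c => cuts z.1 (i, q)) =
        fun _ => cuts (fun i => (c.1 i : ℝ)) (i, q) := by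
      funext z
      have := z.2 i
      simp only [hi, false_and, not_false_eq_true, true_and, false_or] at this
      simp [cuts, this]
    rw [this]
    exact continuous_const

/-! ### The compact space -/

lemma exists_continuous_ne_zero_iff {Q : Type*} [MetricSpace Q] {V : Set Q} (hV : IsOpen V) :
    ∃ f : Q → ℝ, Continuous f ∧ ∀ z, f z ≠ 0 ↔ z ∈ V := by
  rcases Vᶜ.eq_empty_or_nonempty with h | h
  · exact ⟨fun _ => 1, continuous_const, fun z => by simp [compl_empty_iff.1 h]⟩
  · refine ⟨fun z => Metric.infDist z Vᶜ, Metric.continuous_infDist_pt _, fun z => ?_⟩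
    rw [Ne, ← hV.isClosed_compl.mem_iff_infDist_zero h, notMem_compl_iff]

/-- A point-finite sequence of functions whose cozero sets have small diameter and cover
exactly the open set `U`. -/
lemma exists_stage {Q : Type*} [MetricSpace Q] [TopologicalSpace.SeparableSpace Q] [Nonempty Q]
    {U : Set Q} (hU : IsOpen U) {ε : ℝ} (hε : 0 < ε) :
    ∃ f : ℕ → Q → ℝ, (∀ i, Continuous (f i)) ∧ (∀ i, ∀ z ∉ U, f i z = 0) ∧
      (∀ z, {i | f i z ≠ 0}.Finite) ∧ (∀ z ∈ U, ∃ i, f i z ≠ 0) ∧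
      ∀ i x y, f i x ≠ 0 → f i y ≠ 0 → dist x y < ε := by
  let d := TopologicalSpace.denseSeq Q
  obtain ⟨v, hvo, hvc, hvf, hvs⟩ := precise_refinement (X := U)
    (fun i : ℕ => Subtype.val ⁻¹' Metric.ball (d i) (ε / 2))
    (fun i => Metric.isOpen_ball.preimage continuous_subtype_val) (by
      refine eq_univ_of_forall fun z => mem_iUnion.2 ?_
      exact (TopologicalSpace.denseRange_denseSeq Q).exists_dist_lt z.1 (half_pos hε))
  choose f hfc hf using fun i => exists_continuous_ne_zero_iff (hU.isOpenMap_subtype_val _ (hvo i))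
  refine ⟨f, hfc, fun i z hz => ?_, fun z => ?_, fun z hz => ?_, fun i x y hx hy => ?_⟩
  · by_contra h
    obtain ⟨w, -, rfl⟩ := (hf i z).1 h
    exact hz w.2
  · by_cases hz : z ∈ U
    · refine (hvf.point_finite ⟨z, hz⟩).subset fun i hi => ?_
      obtain ⟨w, hw, rfl⟩ := (hf i z).1 hi
      exact hw
    · convert Set.finite_empty (α := ℕ)
      ext i
      simp only [mem_ofPred_eq, hf, mem_empty_iff_false, iff_false]
      rintro ⟨w, -, rfl⟩
      exact hz w.2
  · obtain ⟨i, hi⟩ := mem_iUnion.1 (hvc.symm ▸ mem_univ (⟨z, hz⟩ : U))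
    exact ⟨i, (hf i z).2 ⟨_, hi, rfl⟩⟩
  · obtain ⟨x', hx', rfl⟩ := (hf i x).1 hx
    obtain ⟨y', hy', rfl⟩ := (hf i y).1 hy
    have h1 : dist x'.1 (d i) < ε / 2 := hvs i hx'
    have h2 : dist y'.1 (d i) < ε / 2 := hvs i hy'
    linarith [dist_triangle_right x'.1 y'.1 (d i)]

/-- A Polish space is homeomorphic to the intersection of a decreasing sequence of open subsets of
a compact metrizable space, here a compact subset of the Hilbert cube. -/
lemma exists_compactification (X : Type*) [TopologicalSpace X] [PolishSpace X] :
    ∃ (H : Set (ℕ → unitInterval)) (e : X → H) (U : ℕ → Set H), CompactSpace H ∧ IsEmbedding e ∧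
      (∀ m, IsOpen (U m)) ∧ Antitone U ∧ ⋂ m, U m = range e := by
  let := TopologicalSpace.upgradeIsCompletelyMetrizable X
  obtain ⟨F, hF⟩ := Metric.PiNatEmbed.exists_embedding_to_hilbert_cube (X := X)
  let e : X → closure (range F) := fun x => ⟨F x, subset_closure (mem_range_self x)⟩
  have he : IsEmbedding e := hF.codRestrict _ _
  have hd : DenseRange e := by
    intro z
    rw [closure_subtype]
    have : Subtype.val '' range e = range F := by
      rw [← range_comp]; rfl
    rw [this]
    exact z.2
  -- `U m` is the set of points with a neighbourhood whose trace on `X` is small.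
  let U : ℕ → Set (closure (range F)) := fun m =>
    ⋃₀ {V | IsOpen V ∧ ∀ a b, e a ∈ V → e b ∈ V → dist a b < 1 / (m + 1 : ℝ)}
  refine ⟨closure (range F), e, U, isCompact_iff_compactSpace.1 isClosed_closure.isCompact, he,
    fun m => isOpen_sUnion fun V hV => hV.1, fun m n hmn => ?_, Subset.antisymm ?_ ?_⟩
  · refine sUnion_subset_sUnion fun V hV => ⟨hV.1, fun a b ha hb => (hV.2 a b ha hb).trans_le ?_⟩
    exact one_div_le_one_div_of_le (by positivity) (by gcongr)
  · intro z hz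
    rw [mem_iInter] at hz
    have hne : (comap e (𝓝 z)).NeBot :=
      comap_neBot_iff_compl_range.2 fun h => mem_closure_iff_nhds.1 (hd z) _ h |>.elim
        fun _ hy => hy.1 hy.2
    have hca : Cauchy (comap e (𝓝 z)) := by
      refine Metric.cauchy_iff.2 ⟨hne, fun ε hε => ?_⟩
      obtain ⟨m, hm⟩ := exists_nat_one_div_lt hε
      obtain ⟨V, ⟨hVo, hV⟩, hzV⟩ := hz m
      exact ⟨e ⁻¹' V, preimage_mem_comap (hVo.mem_nhds hzV),
        fun a ha b hb => (hV a b ha hb).trans hm⟩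
    obtain ⟨x, hx⟩ := CompleteSpace.complete hca
    refine ⟨x, tendsto_nhds_unique (f := e) (l := comap e (𝓝 z)) ?_ tendsto_comap⟩
    exact he.continuous.continuousAt.mono_left hx
  · rintro _ ⟨x, rfl⟩
    refine mem_iInter.2 fun m => ?_
    have hb : Metric.ball x (1 / (m + 1 : ℝ) / 2) ∈ 𝓝 x := Metric.ball_mem_nhds _ (by positivity)
    rw [he.nhds_eq_comap] at hb
    obtain ⟨t, ht, hts⟩ := hb
    obtain ⟨V, hVt, hVo, hxV⟩ := mem_nhds_iff.1 ht
    refine ⟨V, ⟨hVo, fun a b ha hb => ?_⟩, hxV⟩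
    have h1 : dist a x < _ := hts (hVt ha)
    have h2 : dist b x < _ := hts (hVt hb)
    linarith [dist_triangle_right a b x]

/-- A nonempty Polish space embeds in a compact space of real sequences so that all the remaining
points are finitely supported. -/
lemma exists_compact_finite_support (X : Type*) [TopologicalSpace X] [PolishSpace X]
    [Nonempty X] :
    ∃ (K : Set (ℕ × ℕ → ℝ)) (h : X → K), IsCompact K ∧ IsEmbedding h ∧
      ∀ k : K, k ∉ range h → {i | k.1 i ≠ 0}.Finite := by
  obtain ⟨H, e, U, hH, he, hUo, hUa, hUe⟩ := exists_compactification X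
  let := TopologicalSpace.metrizableSpaceMetric H
  have : Nonempty H := (inferInstance : Nonempty X).map e
  choose f hfc hfU hff hfne hfd using
    fun m => exists_stage (hUo m) (Nat.one_div_pos_of_nat (α := ℝ) (n := m))
  let Φ : H → ℕ × ℕ → ℝ := fun z p => f p.1 p.2 z
  have hΦ : Continuous Φ := continuous_pi fun p => hfc p.1 p.2
  have hfib : ∀ x, Φ ⁻¹' {Φ (e x)} = {e x} := by
    intro x
    refine Subset.antisymm (fun y hy => ?_) (by simp)
    by_contra hne
    obtain ⟨m, hm⟩ := exists_nat_one_div_lt (dist_pos.2 hne)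
    have hx : e x ∈ U m := mem_iInter.1 (hUe.symm ▸ mem_range_self x) m
    obtain ⟨i, hi⟩ := hfne m _ hx
    have hyi : f m i y = f m i (e x) := congrFun hy (m, i)
    exact (hfd m i y (e x) (hyi ▸ hi) hi).not_gt hm
  have hemb : IsEmbedding (Φ ∘ e) := by
    refine ⟨isInducing_iff_nhds.2 fun x => ?_, fun x y hxy => ?_⟩
    · rw [← comap_comap, Function.comp_apply, hΦ.isClosedMap.comap_nhds_eq hΦ, hfib,
        nhdsSet_singleton, he.nhds_eq_comap]
    · have : e x ∈ Φ ⁻¹' {Φ (e y)} := hxy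
      rw [hfib] at this
      exact he.injective this
  refine ⟨range Φ, fun x => ⟨Φ (e x), mem_range_self _⟩, isCompact_range hΦ,
    hemb.codRestrict _ _, ?_⟩
  rintro ⟨_, z, rfl⟩ hz
  have hzU : ∃ m, z ∉ U m := by
    by_contra! h
    obtain ⟨x, rfl⟩ : z ∈ range e := hUe ▸ mem_iInter.2 h
    exact hz ⟨x, rfl⟩
  obtain ⟨m, hm⟩ := hzU
  refine ((finite_Iio m).biUnion fun n _ => (hff n z).image (Prod.mk n)).subset ?_
  rintro ⟨n, i⟩ hni
  refine mem_biUnion (x := n) ?_ ⟨i, hni, rfl⟩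
  by_contra hmn
  exact hni (hfU n i z fun hzn => hm (hUa (not_lt.1 hmn) hzn))

/-- Every Polish space is σ-homeomorphic to a compact metrizable space. -/
theorem stmt1 (X : Type*) [TopologicalSpace X] [PolishSpace X] :
    ∃ (K : Type) (tK : TopologicalSpace K),
      @CompactSpace K tK ∧ @TopologicalSpace.MetrizableSpace K tK ∧
      @SigmaHomeomorphic X K _ tK := by
  rcases isEmpty_or_nonempty X with hX | hX
  · refine ⟨Empty, inferInstance, inferInstance, inferInstance, fun _ => ∅, fun _ => ∅,
      Subsingleton.elim _ _, Subsingleton.elim _ _, fun _ => ⟨Homeomorph.empty⟩⟩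
  by_cases hc : Countable X
  · obtain ⟨s, hs⟩ := exists_surjective_nat X
    refine ⟨Unit, inferInstance, inferInstance, inferInstance, fun n => {s n}, fun _ => {()},
      ?_, eq_univ_of_forall fun _ => mem_iUnion.2 ⟨0, rfl⟩, fun n => ⟨Homeomorph.homeomorphOfUnique _ _⟩⟩
    refine eq_univ_of_forall fun x => mem_iUnion.2 ?_
    obtain ⟨n, rfl⟩ := hs x
    exact ⟨n, rfl⟩
  obtain ⟨K, h, hK, hh, hfin⟩ := exists_compact_finite_support X
  obtain ⟨g, -, hgc, hgi⟩ := isClosed_univ.exists_nat_bool_injection_of_not_countable (α := X)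
    (fun h => hc (countable_univ_iff.1 h))
  have hg : IsEmbedding g := (hgc.isClosedEmbedding hgi).isEmbedding
  obtain ⟨ν⟩ : Nonempty ((ℕ × ℕ) × ℚ ≃ ℕ) := nonempty_equiv_of_countable
  let c : ((ℕ × ℕ) × ℚ → Bool) ≃ₜ (ℕ → Bool) := Homeomorph.piCongrLeft (Y := fun _ => Bool) ν
  refine ⟨K, inferInstance, isCompact_iff_compactSpace.1 hK, inferInstance,
    sigmaHomeomorphic_of_cover h hh
      (fun p : ((ℕ × ℕ) →₀ ℚ) × Finset (ℕ × ℕ) => Subtype.val ⁻¹' ratPiece p)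
      (fun p => ?_) (fun k => ?_)⟩
  · let r : (Subtype.val ⁻¹' ratPiece p : Set K) → ratPiece p := fun z => ⟨z.1.1, z.2⟩
    have hr : IsEmbedding r :=
      (IsEmbedding.subtypeVal.comp IsEmbedding.subtypeVal).codRestrict _ _
    exact ⟨_, hg.comp (c.isEmbedding.comp
      ((isEmbedding_cuts _ (continuous_cuts_ratPiece p)).comp hr))⟩
  · by_cases hk : k ∈ range h
    · exact .inl hk
    · exact .inr (exists_mem_ratPiece k.1 (hfin k hk))
end

section
/- (Cantor–Bernstein for σ-embeddability.) Let X and Y be topological spaces. If X is σ-embeddable into Y and Y is σ-embeddable into X, then X and Y are σ-homeomorphic. -/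
/-!
The covers in a σ-homeomorphism need not be disjoint, so no back-and-forth argument is needed.
If the `A n` cover `X` with `A n ≃ₜ B n ⊆ Y`, and the `C n` cover `Y` with `C n ≃ₜ D n ⊆ X`, then
the `A n` together with the `D n` cover `X`, the `B n` together with the `C n` cover `Y`, and
corresponding pieces are homeomorphic.
-/

open Set

/-- Cantor–Bernstein for σ-embeddability. -/
theorem stmt2 (X Y : Type*) [TopologicalSpace X] [TopologicalSpace Y]
    (h₁ : SigmaEmbeddable X Y) (h₂ : SigmaEmbeddable Y X) :
    SigmaHomeomorphic X Y := by
  obtain ⟨A, hA, hAB⟩ := h₁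
  obtain ⟨C, hC, hCD⟩ := h₂
  choose B hB using hAB
  choose D hD using hCD
  -- Index the two families by `ℕ ⊕ ℕ`, then transfer along `ℕ ≃ ℕ ⊕ ℕ`.
  let e : ℕ ≃ ℕ ⊕ ℕ := Equiv.natSumNatEquivNat.symm
  refine ⟨fun n => Sum.elim A D (e n), fun n => Sum.elim B C (e n), ?_, ?_, fun n => ?_⟩
  · rw [e.surjective.iUnion_comp (Sum.elim A D), iUnion_sum]
    simp [hA]
  · rw [e.surjective.iUnion_comp (Sum.elim B C), iUnion_sum]
    simp [hC]
  · beta_reduce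
    cases e n with
    | inl k => exact hB k
    | inr k => exact (hD k).map Homeomorph.symm
end
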